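/- Let m, c₀, M > 0. There exist γ₀ ≥ 1 and C > 0, depending only on m, c₀, M, with the following property. Let ε ∈ (0,1], γ ≥ γ₀, τ ∈ ℝ, ξ = (ξ₁,ξ₂) ∈ ℝ², and set ⟨ζ^ε⟩ = (γ² + τ² + ε²|ξ|⁴)^{1/4}. Let a₀ : (−∞,0] → ℝ and a = (a_{ij}) : (−∞,0] → Sym₃(ℝ) be continuously differentiable with, for all z ≤ 0: a₀(z) ≥ m, a₃₃(z) ≥ m, |a₀(z)| + |a(z)| + √ε(|a₀′(z)| + |a′(z)|) ≤ M, and ηᵀ a(z) η ≥ c₀|η|² for all η ∈ ℝ³. Let Ω : (−∞,0] → ℂ be twice continuously differentiable and F : (−∞,0] → ℂ continuous, with Ω, Ω′, F square-integrable on (−∞,0) and Ω(z), Ω′(z) → 0 as z → −∞, satisfying for z < 0 the equation (a₀/a₃₃)(γ + iτ) Ω + Σ_{1≤i,j≤2} (a_{ij}/a₃₃) ε ξ_i ξ_j Ω − 2i Σ_{k=1}^{2} (a_{k3}/a₃₃) ε ξ_k Ω′ = ε Ω″ + R + F, where R = i ε Σ_{k=1}^{2} (a_{3k}′/a₃₃)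 ξ_k Ω + ε (a₃₃′/a₃₃) Ω′. Then ⟨ζ^ε⟩ ∫_{−∞}^{0} |Ω|² dz + (ε/⟨ζ^ε⟩) ∫_{−∞}^{0} |Ω′|² dz ≤ C ( √ε |Ω(0)|² + ⟨ζ^ε⟩^{−3} ∫_{−∞}^{0} |F|² dz ). -/

import Mathlib

open MeasureTheory

lemma pe_core (G G' K : ℝ → ℝ) (hG : ContinuousOn G (Set.Iic 0))
    (hd : ∀ z < 0, HasDerivAt G (G' z) z) (hK : IntegrableOn K (Set.Iio 0) volume)
    (hle : ∀ z < 0, K z ≤ G' z) (hlim : Filter.Tendsto G Filter.atBot (nhds 0)) :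
    ∫ z in Set.Iio (0:ℝ), K z ≤ G 0 := by
  have hK' : IntegrableOn K (Set.Iic 0) volume := by
    rwa [integrableOn_Iic_iff_integrableOn_Iio]
  rw [← integral_Iic_eq_integral_Iio]
  have h1 := intervalIntegral_tendsto_integral_Iic (0:ℝ) hK' Filter.tendsto_id
  have h2 : Filter.Tendsto (fun z => G 0 - G z) Filter.atBot (nhds (G 0 - 0)) :=
    tendsto_const_nhds.sub hlim
  rw [sub_zero] at h2
  refine le_of_tendsto_of_tendsto h1 h2 ?_
  filter_upwards [Filter.eventually_le_atBot (0:ℝ)] with z hz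
  refine intervalIntegral.integral_le_sub_of_hasDeriv_right_of_le (g' := G') hz
    (hG.mono Set.Icc_subset_Iic_self) (fun w hw => (hd w hw.2).hasDerivWithinAt)
    (hK'.mono_set Set.Icc_subset_Iic_self) (fun w hw => hle w hw.2)

lemma pe_cs (a b c d N S : ℝ) (hN : 0 ≤ N) (hS : 0 ≤ S) (h1 : a^2+b^2 = N^2)
    (h2 : c^2+d^2 = S^2) : |a*c+b*d| ≤ N*S := by
  apply abs_le_of_sq_le_sq _ (by positivity)
  rw [mul_pow, ← h1, ← h2]
  nlinarith [sq_nonneg (a*d-b*c)]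

lemma pe_mul (a b c d : ℝ) (h1 : |a| ≤ c) (h2 : |b| ≤ d) : |a*b| ≤ c*d := by
  rw [abs_mul]
  exact mul_le_mul h1 h2 (abs_nonneg _) ((abs_nonneg _).trans h1)

/-- bound on the second-derivative term -/
lemma pe_aux1 (M A L N S P T : ℝ) (hM : 0 < M) (hA0 : 0 < A) (hL : 1 ≤ L)
    (key : A*T ≤ 4*(M*L^2*(N*S)) + M*S^2 + M*(P*S)) :
    2/L*T ≤ 8*M/A*(L^2*N^2+S^2+P^2/L^2) := by
  have hL0 : 0 < L := by linarith
  have e : 2/L*T = 2/(L*A)*(A*T) := by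
    field_simp
  rw [e]
  calc _ ≤ 2/(L*A)*(4*(M*L^2*(N*S)) + M*S^2 + M*(P*S)) := by gcongr
    _ = 2*M/A*(4*(L*N)*S + S^2/L + (P/L)*S) := by field_simp
    _ ≤ 2*M/A*(4*((L*N)^2+S^2+(P/L)^2)) := by
      gcongr
      have : S^2/L ≤ S^2 := div_le_self (by positivity) hL
      nlinarith [sq_nonneg (L*N-S), sq_nonneg (P/L-S), sq_nonneg (L*N), sq_nonneg (P/L)]
    _ = _ := by rw [mul_pow, div_pow]; ring

lemma pe_pw1 (m M r γ τ X L a0 A A' b b' Q x y p q f g p' q' δ : ℝ)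
    (hm : 0 < m) (hM : 0 < M) (hr : 0 < r) (hX : 0 ≤ X) (hL : 1 ≤ L) (hδ : 0 ≤ δ)
    (hγ0 : 0 ≤ γ) (hγ : γ ≤ L^2) (hτ : |τ| ≤ L^2) (hX1 : r * X ≤ L)
    (ha0 : |a0| ≤ M) (hA : m ≤ A) (hAM : |A| ≤ M) (hA' : |r * A'| ≤ M)
    (hb' : |r * b'| ≤ M * X) (hQ : |Q| ≤ M * X^2)
    (e1 : r^2*A*p' = a0*(γ*x-τ*y) + r^2*Q*x + 2*r^2*b*q + r^2*b'*y - r^2*A'*p - A*f)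
    (e2 : r^2*A*q' = a0*(γ*y+τ*x) + r^2*Q*y - 2*r^2*b*p - r^2*b'*x - r^2*A'*q - A*g) :
    δ * r^3 / L * (2*(p*p'+q*q')) ≤
      8*δ*M/m * (L^2*(x^2+y^2) + r^2*(p^2+q^2) + (f^2+g^2)/L^2) := by
  have hL0 : 0 < L := by linarith
  have hA0 : 0 < A := by linarith
  obtain ⟨N, hN, hN2⟩ : ∃ N, 0 ≤ N ∧ x^2+y^2 = N^2 :=
    ⟨_, Real.sqrt_nonneg _, (Real.sq_sqrt (by positivity)).symm⟩
  obtain ⟨S, hS, hS2⟩ : ∃ S, 0 ≤ S ∧ (r*p)^2+(r*q)^2 = S^2 :=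
    ⟨_, Real.sqrt_nonneg _, (Real.sq_sqrt (by positivity)).symm⟩
  obtain ⟨P, hP, hP2⟩ : ∃ P, 0 ≤ P ∧ f^2+g^2 = P^2 :=
    ⟨_, Real.sqrt_nonneg _, (Real.sq_sqrt (by positivity)).symm⟩
  have c1 := pe_cs _ _ _ _ N S hN hS hN2 hS2
  have c2 := pe_cs x y (r*q) (-(r*p)) N S hN hS hN2 (by linarith)
  have c3 := pe_cs _ _ _ _ P S hP hS hP2 hS2
  have hrX : 0 ≤ r * X := by positivity
  have t1 : |a0*γ*(x*(r*p)+y*(r*q))| ≤ M*L^2*(N*S) :=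
    pe_mul _ _ _ _ (pe_mul _ _ _ _ ha0 (by rwa [abs_of_nonneg hγ0])) c1
  have t2 : |a0*τ*(x*(r*q)+y*(-(r*p)))| ≤ M*L^2*(N*S) :=
    pe_mul _ _ _ _ (pe_mul _ _ _ _ ha0 hτ) c2
  have t3 : |r^2*Q*(x*(r*p)+y*(r*q))| ≤ M*L^2*(N*S) := by
    refine pe_mul _ _ _ _ ?_ c1
    rw [abs_mul, abs_of_nonneg (by positivity : (0:ℝ) ≤ r^2)]
    calc r^2*|Q| ≤ r^2*(M*X^2) := by gcongr
      _ = M*(r*X)^2 := by ring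
      _ ≤ M*L^2 := by gcongr
  have t4 : |r*(r*b')*(x*(r*q)+y*(-(r*p)))| ≤ M*L^2*(N*S) := by
    refine pe_mul _ _ _ _ ?_ c2
    rw [abs_mul, abs_of_nonneg hr.le]
    calc r*|r*b'| ≤ r*(M*X) := by gcongr
      _ = M*(r*X) := by ring
      _ ≤ M*L^2 := by gcongr; nlinarith
  have t5 : |r*A'*S^2| ≤ M*S^2 := pe_mul _ _ _ _ hA' (by rw [abs_of_nonneg (by positivity)])
  have t6 : |A*(f*(r*p)+g*(r*q))| ≤ M*(P*S) := pe_mul _ _ _ _ hAM c3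
  have key : r^3*A*(p*p'+q*q') ≤ 4*(M*L^2*(N*S)) + M*S^2 + M*(P*S) := by
    have : r^3*A*(p*p'+q*q') = a0*γ*(x*(r*p)+y*(r*q)) + a0*τ*(x*(r*q)+y*(-(r*p)))
       + r^2*Q*(x*(r*p)+y*(r*q)) - r*(r*b')*(x*(r*q)+y*(-(r*p))) - r*A'*S^2
       - A*(f*(r*p)+g*(r*q)) := by
      rw [← hS2]
      linear_combination r*p*e1 + r*q*e2
    rw [this]
    have := abs_le.1 t1
    have := abs_le.1 t2
    have := abs_le.1 t3
    have := abs_le.1 t4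
    have := abs_le.1 t5
    have := abs_le.1 t6
    linarith
  have k2 : r^3/L*(2*(p*p'+q*q')) ≤ 8*M/A*(L^2*N^2+S^2+P^2/L^2) := by
    have := pe_aux1 M A L N S P (r^3*(p*p'+q*q')) hM hA0 hL (by linarith)
    calc _ = 2/L*(r^3*(p*p'+q*q')) := by ring
      _ ≤ _ := this
  calc δ * r^3 / L * (2*(p*p'+q*q')) = δ * (r^3/L*(2*(p*p'+q*q'))) := by ring
    _ ≤ δ * (8*M/A*(L^2*N^2+S^2+P^2/L^2)) := by gcongr
    _ ≤ δ * (8*M/m*(L^2*N^2+S^2+P^2/L^2)) := by gcongr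
    _ = _ := by rw [hN2, hP2, ← hS2]; ring

lemma pe_pw2 (c M r γ τ σ X L a0 A A' b b' Q x y p q f g p' q' : ℝ)
    (hM : 0 < M) (hc : 0 < c) (hr : 0 < r) (hL : 1 ≤ L)
    (hσ : σ = 1 ∨ σ = -1) (hστ : σ * τ = |τ|) (hγ0 : 0 ≤ γ)
    (hL2 : L^2 ≤ γ + |τ| + r^2*X^2)
    (ha0 : c ≤ a0) (hAM : |A| ≤ M)
    (hform : c*(X^2*(x^2+y^2) + (p^2+q^2)) ≤ Q*(x^2+y^2) + A*(p^2+q^2) + 2*b*(x*q-y*p))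
    (e1 : r^2*A*p' = a0*(γ*x-τ*y) + r^2*Q*x + 2*r^2*b*q + r^2*b'*y - r^2*A'*p - A*f)
    (e2 : r^2*A*q' = a0*(γ*y+τ*x) + r^2*Q*y - 2*r^2*b*p - r^2*b'*x - r^2*A'*q - A*g) :
    3/4*c*(L^2*(x^2+y^2) + r^2*(p^2+q^2)) - 4*M^2/c*((f^2+g^2)/L^2) ≤
     r^2*(A'*(p*x+q*y) + A*(p'*x+p*p+(q'*y+q*q)))
     + σ*(r^2*(A'*(q*x-p*y) + A*(q'*x+q*p-(p'*y+p*q)) + (b'*(x^2+y^2)+b*(2*(x*p+y*q))))) := by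
  have hL0 : 0 < L := by linarith
  obtain ⟨N, hN, hN2⟩ : ∃ N, 0 ≤ N ∧ x^2+y^2 = N^2 :=
    ⟨_, Real.sqrt_nonneg _, (Real.sq_sqrt (by positivity)).symm⟩
  obtain ⟨P, hP, hP2⟩ : ∃ P, 0 ≤ P ∧ f^2+g^2 = P^2 :=
    ⟨_, Real.sqrt_nonneg _, (Real.sq_sqrt (by positivity)).symm⟩
  have c1 := pe_cs _ _ _ _ N P hN hP hN2 hP2
  have c2 := pe_cs x y g (-f) N P hN hP hN2 (by linarith)
  have t1 := abs_le.1 (pe_mul _ _ _ _ hAM c1)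
  have t2' : |σ*(A*(x*g+y*(-f)))| ≤ M*(N*P) := by
    have := pe_mul _ _ _ _ hAM c2
    rcases hσ with h | h <;> rw [h]
    · simpa using this
    · simpa [abs_neg] using this
  have t2 := abs_le.1 t2'
  have E1 : r^2*(A'*(p*x+q*y) + A*(p'*x+p*p+(q'*y+q*q))) =
     a0*γ*(x^2+y^2) + r^2*(Q*(x^2+y^2) + A*(p^2+q^2) + 2*b*(x*q-y*p)) - A*(x*f+y*g) := by
    linear_combination x*e1+y*e2
  have E2 : σ*(r^2*(A'*(q*x-p*y) + A*(q'*x+q*p-(p'*y+p*q)) + (b'*(x^2+y^2)+b*(2*(x*p+y*q))))) =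
     a0*(|τ|)*(x^2+y^2) - σ*(A*(x*g+y*(-f))) := by
    rw [← hστ]
    linear_combination σ*(x*e2-y*e1)
  rw [E1, E2]
  have h3 : r^2*(c*(X^2*(x^2+y^2) + (p^2+q^2))) ≤ r^2*(Q*(x^2+y^2) + A*(p^2+q^2) + 2*b*(x*q-y*p)) := by
    gcongr
  have h4 : c*(γ+|τ|)*(x^2+y^2) ≤ a0*(γ+|τ|)*(x^2+y^2) := by gcongr
  have h5 : c*L^2*(x^2+y^2) ≤ c*(γ + |τ| + r^2*X^2)*(x^2+y^2) := by gcongr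
  have h6 : 2*(M*(N*P)) ≤ 1/4*c*(L^2*(x^2+y^2)) + 4*M^2/c*((f^2+g^2)/L^2) := by
    rw [hN2, hP2]
    have h : 1/4*c*(L^2*N^2) + 4*M^2/c*(P^2/L^2) - 2*(M*(N*P))
        = (c/4)*((L*N - 4*M*P/(c*L))^2) := by
      field_simp
      ring
    have : 0 ≤ (c/4)*((L*N - 4*M*P/(c*L))^2) := by positivity
    linarith
  have h7 : 0 ≤ 1/4*c*(r^2*(p^2+q^2)) := by positivity
  linarith

lemma pe_bd (M δ r L X A b σ x y p q : ℝ) (hM : 0 < M) (hδ : 0 < δ) (hr : 0 < r) (hL : 1 ≤ L)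
    (hσ : σ = 1 ∨ σ = -1) (hX1 : r * X ≤ L) (hAM : |A| ≤ M) (hb : |b| ≤ M * X) :
    r^2*(A*(p*x+q*y)) + σ*(r^2*(A*(q*x-p*y) + b*(x^2+y^2))) - δ*r^3/L*(p^2+q^2)
      ≤ (M^2/δ + M)*(r*L*(x^2+y^2)) := by
  have hL0 : 0 < L := by linarith
  obtain ⟨N, hN, hN2⟩ : ∃ N, 0 ≤ N ∧ x^2+y^2 = N^2 :=
    ⟨_, Real.sqrt_nonneg _, (Real.sq_sqrt (by positivity)).symm⟩
  obtain ⟨P, hP, hP2⟩ : ∃ P, 0 ≤ P ∧ p^2+q^2 = P^2 :=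
    ⟨_, Real.sqrt_nonneg _, (Real.sq_sqrt (by positivity)).symm⟩
  have c1 := pe_cs _ _ _ _ P N hP hN hP2 hN2
  have c2 := pe_cs q (-p) _ _ P N hP hN (by linarith) hN2
  have t1 := abs_le.1 (pe_mul _ _ _ _ hAM c1)
  have t2 := abs_le.1 (pe_mul _ _ _ _ hAM c2)
  have t3 := abs_le.1 (pe_mul _ (x^2+y^2) _ (N^2) hb (by rw [← hN2, abs_of_nonneg (by positivity)]))
  have h1 : A*(p*x+q*y) + σ*(A*(q*x-p*y) + b*(x^2+y^2)) ≤ 2*(M*(P*N)) + M*X*N^2 := by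
    rcases hσ with h | h <;> rw [h] <;> nlinarith
  have h2 : r^2*(A*(p*x+q*y) + σ*(A*(q*x-p*y) + b*(x^2+y^2))) ≤ r^2*(2*(M*(P*N)) + M*X*N^2) := by
    gcongr
  have h3 : r^2*(M*X*N^2) ≤ M*(r*L*N^2) := by
    calc r^2*(M*X*N^2) = M*r*N^2*(r*X) := by ring
      _ ≤ M*r*N^2*L := by gcongr
      _ = _ := by ring
  have h4 : r^2*(2*(M*(P*N))) ≤ δ*r^3/L*P^2 + M^2/δ*(r*L*N^2) := by
    have h : δ*r^3/L*P^2 + M^2/δ*(r*L*N^2) - r^2*(2*(M*(P*N)))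
       = r*δ/L*(r*P - M*L*N/δ)^2 := by
      field_simp
      ring
    have : 0 ≤ r*δ/L*(r*P - M*L*N/δ)^2 := by positivity
    linarith
  rw [hN2] at *
  rw [hP2]
  linarith

lemma pe_mid (m c M r γ τ X L : ℝ) (a0 A A' b b' Q x y p q f g p' q' : ℝ → ℝ)
    (hm : 0 < m) (hc : 0 < c) (hM : 0 < M) (hr : 0 < r) (hX : 0 ≤ X) (hL : 1 ≤ L)
    (hγ0 : 0 ≤ γ) (hγ : γ ≤ L^2) (hτ : |τ| ≤ L^2) (hX1 : r * X ≤ L)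
    (hL2 : L^2 ≤ γ + |τ| + r^2*X^2)
    (ha0 : ∀ z ≤ 0, |a0 z| ≤ M) (ha0c : ∀ z ≤ 0, c ≤ a0 z) (hA : ∀ z ≤ 0, m ≤ A z)
    (hAM : ∀ z ≤ 0, |A z| ≤ M) (hA' : ∀ z ≤ 0, |r * A' z| ≤ M)
    (hb : ∀ z ≤ 0, |b z| ≤ M * X)
    (hb' : ∀ z ≤ 0, |r * b' z| ≤ M * X) (hQ : ∀ z ≤ 0, |Q z| ≤ M * X^2)
    (hform : ∀ z < 0, c*(X^2*(x z^2+y z^2) + (p z^2+q z^2))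
      ≤ Q z*(x z^2+y z^2) + A z*(p z^2+q z^2) + 2*b z*(x z*q z-y z*p z))
    (e1 : ∀ z < 0, r^2*A z*p' z = a0 z*(γ*x z-τ*y z) + r^2*Q z*x z + 2*r^2*b z*q z
      + r^2*b' z*y z - r^2*A' z*p z - A z*f z)
    (e2 : ∀ z < 0, r^2*A z*q' z = a0 z*(γ*y z+τ*x z) + r^2*Q z*y z - 2*r^2*b z*p z
      - r^2*b' z*x z - r^2*A' z*q z - A z*g z)
    (dA : ∀ z < 0, HasDerivAt A (A' z) z) (db : ∀ z < 0, HasDerivAt b (b' z) z)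
    (dx : ∀ z < 0, HasDerivAt x (p z) z) (dy : ∀ z < 0, HasDerivAt y (q z) z)
    (dp : ∀ z < 0, HasDerivAt p (p' z) z) (dq : ∀ z < 0, HasDerivAt q (q' z) z)
    (cA : ContinuousOn A (Set.Iic 0)) (cb : ContinuousOn b (Set.Iic 0))
    (cx : ContinuousOn x (Set.Iic 0)) (cy : ContinuousOn y (Set.Iic 0))
    (cp : ContinuousOn p (Set.Iic 0)) (cq : ContinuousOn q (Set.Iic 0))
    (lx : Filter.Tendsto x Filter.atBot (nhds 0)) (ly : Filter.Tendsto y Filter.atBot (nhds 0))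
    (lp : Filter.Tendsto p Filter.atBot (nhds 0)) (lq : Filter.Tendsto q Filter.atBot (nhds 0))
    (ix : IntegrableOn (fun z => x z^2+y z^2) (Set.Iio 0) volume)
    (ip : IntegrableOn (fun z => p z^2+q z^2) (Set.Iio 0) volume)
    (jf : IntegrableOn (fun z => f z^2+g z^2) (Set.Iio 0) volume) :
    c/2*(L^2*(∫ z in Set.Iio (0:ℝ), (x z^2+y z^2)) + r^2*∫ z in Set.Iio (0:ℝ), (p z^2+q z^2))
      - (4*M^2/c + c/4)/L^2*(∫ z in Set.Iio (0:ℝ), (f z^2+g z^2))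
    ≤ (M^2/(c*m/(32*M)) + M)*(r*L*(x 0^2+y 0^2)) := by
  obtain ⟨σ, hσ, hστ⟩ : ∃ σ : ℝ, (σ = 1 ∨ σ = -1) ∧ σ * τ = |τ| := by
    rcases le_total 0 τ with h | h
    · exact ⟨1, Or.inl rfl, by rw [abs_of_nonneg h]; ring⟩
    · exact ⟨-1, Or.inr rfl, by rw [abs_of_nonpos h]; ring⟩
  set δ := c*m/(32*M) with hδd
  have hδ : 0 < δ := by positivity
  set G : ℝ → ℝ := fun z => r^2*(A z*(p z*x z+q z*y z))
    + σ*(r^2*(A z*(q z*x z-p z*y z) + b z*(x z^2+y z^2))) - δ*r^3/L*(p z^2+q z^2) with hG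
  set K : ℝ → ℝ := fun z => c/2*(L^2*(x z^2+y z^2) + r^2*(p z^2+q z^2))
      - (4*M^2/c + c/4)/L^2*(f z^2+g z^2) with hKd
  have i1 : IntegrableOn (fun z => c/2*(L^2*(x z^2+y z^2) + r^2*(p z^2+q z^2)))
      (Set.Iio 0) volume := ((ix.const_mul _).add (ip.const_mul _)).const_mul _
  have i2 : IntegrableOn (fun z => (4*M^2/c + c/4)/L^2*(f z^2+g z^2))
      (Set.Iio 0) volume := jf.const_mul _
  have hK : IntegrableOn K (Set.Iio 0) volume := i1.sub i2
  have hKint : ∫ z in Set.Iio (0:ℝ), K z =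
      c/2*(L^2*(∫ z in Set.Iio (0:ℝ), (x z^2+y z^2)) + r^2*∫ z in Set.Iio (0:ℝ), (p z^2+q z^2))
      - (4*M^2/c + c/4)/L^2*(∫ z in Set.Iio (0:ℝ), (f z^2+g z^2)) := by
    rw [hKd, integral_sub i1 i2, integral_const_mul, integral_const_mul,
      integral_add (ix.const_mul _) (ip.const_mul _), integral_const_mul, integral_const_mul]
  rw [← hKint]
  have hG0 : G 0 ≤ (M^2/δ + M)*(r*L*(x 0^2+y 0^2)) :=
    pe_bd M δ r L X (A 0) (b 0) σ (x 0) (y 0) (p 0) (q 0) hM hδ hr hL hσ hX1 (hAM 0 le_rfl)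
      (hb 0 le_rfl)
  refine le_trans ?_ hG0
  have bA : Filter.IsBoundedUnder (· ≤ ·) Filter.atBot (norm ∘ A) :=
    Filter.isBoundedUnder_of_eventually_le (a := M) (by
      filter_upwards [Filter.eventually_le_atBot (0:ℝ)] with z hz using hAM z hz)
  have bb : Filter.IsBoundedUnder (· ≤ ·) Filter.atBot (norm ∘ b) :=
    Filter.isBoundedUnder_of_eventually_le (a := M*X) (by
      filter_upwards [Filter.eventually_le_atBot (0:ℝ)] with z hz using hb z hz)
  have hlim : Filter.Tendsto G Filter.atBot (nhds 0) := by
    have l1 : Filter.Tendsto (fun z => p z*x z+q z*y z) Filter.atBot (nhds 0) := by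
      simpa using (lp.mul lx).add (lq.mul ly)
    have l2 : Filter.Tendsto (fun z => q z*x z-p z*y z) Filter.atBot (nhds 0) := by
      simpa using (lq.mul lx).sub (lp.mul ly)
    have l3 : Filter.Tendsto (fun z => x z^2+y z^2) Filter.atBot (nhds 0) := by
      simpa using (lx.pow 2).add (ly.pow 2)
    have l4 : Filter.Tendsto (fun z => p z^2+q z^2) Filter.atBot (nhds 0) := by
      simpa using (lp.pow 2).add (lq.pow 2)
    have k1 := Filter.isBoundedUnder_le_mul_tendsto_zero bA l1
    have k2 := Filter.isBoundedUnder_le_mul_tendsto_zero bA l2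
    have k3 := Filter.isBoundedUnder_le_mul_tendsto_zero bb l3
    have := ((k1.const_mul (r^2)).add (((k2.add k3).const_mul (r^2)).const_mul σ)).sub
      (l4.const_mul (δ*r^3/L))
    simpa using this
  have hGc : ContinuousOn G (Set.Iic 0) := by
    rw [hG]; fun_prop
  refine pe_core G (fun z =>
    r^2*(A' z*(p z*x z+q z*y z) + A z*(p' z*x z+p z*p z+(q' z*y z+q z*q z)))
     + σ*(r^2*(A' z*(q z*x z-p z*y z) + A z*(q' z*x z+q z*p z-(p' z*y z+p z*q z))
      + (b' z*(x z^2+y z^2)+b z*(2*(x z*p z+y z*q z)))))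
     - δ * r^3 / L * (2*(p z*p' z+q z*q' z))) K hGc ?_ hK ?_ hlim
  · intro z hz
    have h1 := (dA z hz).mul (((dp z hz).mul (dx z hz)).add ((dq z hz).mul (dy z hz)))
    have h2 := (dA z hz).mul (((dq z hz).mul (dx z hz)).sub ((dp z hz).mul (dy z hz)))
    have h3 := (db z hz).mul (((dx z hz).pow 2).add ((dy z hz).pow 2))
    have h4 := ((dp z hz).pow 2).add ((dq z hz).pow 2)
    have h5 := ((h1.const_mul (r^2)).add (((h2.add h3).const_mul (r^2)).const_mul σ)).sub
      (h4.const_mul (δ*r^3/L))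
    refine h5.congr_deriv ?_
    simp only [Pi.add_apply, Pi.mul_apply, Pi.pow_apply, Pi.sub_apply]
    push_cast
    ring
  · intro z hz
    have h1 := pe_pw1 m M r γ τ X L (a0 z) (A z) (A' z) (b z) (b' z) (Q z) (x z) (y z) (p z) (q z)
      (f z) (g z) (p' z) (q' z) δ hm hM hr hX hL hδ.le hγ0 hγ hτ hX1 (ha0 z hz.le) (hA z hz.le)
      (hAM z hz.le) (hA' z hz.le) (hb' z hz.le) (hQ z hz.le) (e1 z hz) (e2 z hz)
    have h2 := pe_pw2 c M r γ τ σ X L (a0 z) (A z) (A' z) (b z) (b' z) (Q z) (x z) (y z) (p z)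
      (q z) (f z) (g z) (p' z) (q' z) hM hc hr hL hσ hστ hγ0 hL2 (ha0c z hz.le) (hAM z hz.le)
      (hform z hz) (e1 z hz) (e2 z hz)
    have h3 : 8*δ*M/m = c/4 := by rw [hδd]; field_simp; norm_num
    rw [h3] at h1
    have h4 : K z = 3/4*c*(L^2*(x z^2+y z^2) + r^2*(p z^2+q z^2))
        - 4*M^2/c*((f z^2+g z^2)/L^2)
        - c/4*(L^2*(x z^2+y z^2) + r^2*(p z^2+q z^2) + (f z^2+g z^2)/L^2) := by
      rw [hKd]; ring
    rw [h4]
    exact sub_le_sub h2 h1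

lemma pe_hD {g : ℝ → ℂ} {g' : ℂ} {z : ℝ} (h : HasDerivAt g g' z) :
    HasDerivAt (fun s => (g s).re) g'.re z ∧ HasDerivAt (fun s => (g s).im) g'.im z := by
  refine ⟨?_, ?_⟩
  · exact Complex.reCLM.hasFDerivAt.comp_hasDerivAt z h
  · exact Complex.imCLM.hasFDerivAt.comp_hasDerivAt z h

lemma pe_norm (w : ℂ) : ‖w‖^2 = w.re^2 + w.im^2 := by
  rw [Complex.sq_norm, Complex.normSq_apply]; ring

lemma pe_Q (a b b' c u v M : ℝ) (hM : 0 ≤ M) (h : a^2+b^2+(b'^2+c^2) ≤ M^2) :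
    |a*(u*u)+b*(u*v)+(b'*(v*u)+c*(v*v))| ≤ M*(u^2+v^2) := by
  apply abs_le_of_sq_le_sq _ (by positivity)
  have h1 : (a*u+b*v)^2 ≤ (a^2+b^2)*(u^2+v^2) := by nlinarith [sq_nonneg (a*v-b*u)]
  have h2 : (b'*u+c*v)^2 ≤ (b'^2+c^2)*(u^2+v^2) := by nlinarith [sq_nonneg (b'*v-c*u)]
  have h3 : ((a*u+b*v)*u+(b'*u+c*v)*v)^2 ≤ ((a*u+b*v)^2+(b'*u+c*v)^2)*(u^2+v^2) := by
    nlinarith [sq_nonneg ((a*u+b*v)*v-(b'*u+c*v)*u)]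
  have hn : 0 ≤ u^2+v^2 := by positivity
  calc _ = ((a*u+b*v)*u+(b'*u+c*v)*v)^2 := by ring
    _ ≤ ((a*u+b*v)^2+(b'*u+c*v)^2)*(u^2+v^2) := h3
    _ ≤ ((a^2+b^2+(b'^2+c^2))*(u^2+v^2))*(u^2+v^2) := by gcongr; linarith
    _ ≤ (M^2*(u^2+v^2))*(u^2+v^2) := by gcongr
    _ = _ := by ring

lemma pe_lin (a b u v M X : ℝ) (hM : 0 ≤ M) (hX : 0 ≤ X) (h : a^2+b^2 ≤ M^2)
    (hXu : u^2+v^2 = X^2) : |a*u+b*v| ≤ M*X := by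
  apply abs_le_of_sq_le_sq _ (by positivity)
  rw [mul_pow, ← hXu]
  have : (a*u+b*v)^2 ≤ (a^2+b^2)*(u^2+v^2) := by nlinarith [sq_nonneg (a*v-b*u)]
  exact this.trans (by gcongr)

lemma pe_weight (γ τ e L : ℝ) (hγ : 1 ≤ γ) (he : 0 ≤ e)
    (hL : L = (γ^2+τ^2+e^2)^((1:ℝ)/4)) :
    1 ≤ L ∧ γ ≤ L^2 ∧ |τ| ≤ L^2 ∧ e ≤ L^2 ∧ L^2 ≤ γ + |τ| + e := by
  have h0 : 1 ≤ γ^2+τ^2+e^2 := by nlinarith [sq_nonneg τ, sq_nonneg e]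
  have hL4 : (L^2)^2 = γ^2+τ^2+e^2 := by
    rw [hL, ← pow_mul, ← Real.rpow_natCast, ← Real.rpow_mul (by linarith)]
    norm_num
  have hL1 : 1 ≤ L := by rw [hL]; exact Real.one_le_rpow h0 (by norm_num)
  refine ⟨hL1, ?_, ?_, ?_, ?_⟩
  · apply le_of_sq_le_sq _ (by positivity); rw [hL4]; nlinarith [sq_nonneg τ, sq_nonneg e]
  · apply abs_le_of_sq_le_sq _ (by positivity); rw [hL4]; nlinarith [sq_nonneg γ, sq_nonneg e]
  · apply le_of_sq_le_sq _ (by positivity); rw [hL4]; nlinarith [sq_nonneg τ, sq_nonneg γ]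
  · apply le_of_sq_le_sq _ (by positivity); rw [hL4, ← sq_abs τ]
    have := abs_nonneg τ
    have h1 : 0 ≤ γ * |τ| := by positivity
    have h2 : 0 ≤ γ * e := by positivity
    have h3 : 0 ≤ |τ| * e := by positivity
    nlinarith

lemma pe_bound (a0 r T d T' M : ℝ) (hr : 0 < r) (hT : 0 ≤ T) (hT' : 0 ≤ T')
    (h : |a0| + Real.sqrt T + r * (|d| + Real.sqrt T') ≤ M) :
    |a0| ≤ M ∧ T ≤ M^2 ∧ r^2*T' ≤ M^2 := by
  have h1 := abs_nonneg a0
  have h2 := Real.sqrt_nonneg T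
  have h3 := mul_nonneg hr.le (abs_nonneg d)
  have h4 := mul_nonneg hr.le (Real.sqrt_nonneg T')
  refine ⟨by linarith, ?_, ?_⟩
  · rw [← Real.sq_sqrt hT]; gcongr; linarith
  · rw [← Real.sq_sqrt hT', ← mul_pow]; gcongr; linarith

lemma pe_entry (a : ℝ → Fin 3 → Fin 3 → ℝ) (ha : ContDiffOn ℝ 1 a (Set.Iic 0)) (i j : Fin 3) :
    ContinuousOn (fun s => a s i j) (Set.Iic 0) ∧
    ∀ z < 0, HasDerivAt (fun s => a s i j) (derivWithin (fun s => a s i j) (Set.Iic 0) z) z := by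
  have h : ContDiffOn ℝ 1 (fun s => a s i j) (Set.Iic 0) :=
    (contDiffOn_pi.1 ((contDiffOn_pi.1 ha) i)) j
  refine ⟨h.continuousOn, fun z hz => ?_⟩
  exact ((h.differentiableOn one_ne_zero) z hz.le).hasDerivWithinAt.hasDerivAt (Iic_mem_nhds hz)

lemma pe_Om (Ω : ℝ → ℂ) (h : ContDiffOn ℝ 2 Ω (Set.Iic 0)) :
    ContinuousOn (derivWithin Ω (Set.Iic 0)) (Set.Iic 0) ∧
    (∀ z < 0, derivWithin Ω (Set.Iic 0) z = deriv Ω z) ∧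
    (∀ z < 0, HasDerivAt Ω (derivWithin Ω (Set.Iic 0) z) z) ∧
    (∀ z < 0, HasDerivAt (derivWithin Ω (Set.Iic 0)) (deriv (deriv Ω) z) z) := by
  have hE : ∀ z < 0, derivWithin Ω (Set.Iic 0) z = deriv Ω z := fun z hz =>
    derivWithin_of_mem_nhds (Iic_mem_nhds hz)
  have h1 : ContDiffOn ℝ 1 (derivWithin Ω (Set.Iic 0)) (Set.Iic 0) :=
    h.derivWithin (uniqueDiffOn_Iic 0) (by norm_num)
  refine ⟨h1.continuousOn, hE, fun z hz => ?_, fun z hz => ?_⟩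
  · exact ((h.differentiableOn two_ne_zero) z hz.le).hasDerivWithinAt.hasDerivAt (Iic_mem_nhds hz)
  · have h2 : DifferentiableAt ℝ (derivWithin Ω (Set.Iic 0)) z :=
      ((h1.differentiableOn one_ne_zero) z hz.le).differentiableAt (Iic_mem_nhds hz)
    have h3 : deriv (derivWithin Ω (Set.Iic 0)) z = deriv (deriv Ω) z := by
      apply Filter.EventuallyEq.deriv_eq
      filter_upwards [Iio_mem_nhds hz] with w hw using hE w hw
    rw [← h3]
    exact h2.hasDerivAt

/-- Proposition 10.4 of the paper (estimate (10.24)): the model estimate for the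
Fourier–Laplace transform of the convection–diffusion equation satisfied by the vorticity,
with non-homogeneous Dirichlet data at `z = 0`.  Here `⟨ζ^ε⟩ = (γ² + τ² + ε²|ξ|⁴)^{1/4}`,
`γ` is the Laplace parameter, `(τ, ξ)` the Fourier variables, and `′ = d/dz`. -/
theorem model_parabolic_estimate (m c₀ M : ℝ) (hm : 0 < m) (hc₀ : 0 < c₀) (hM : 0 < M) :
    ∃ γ₀ : ℝ, 1 ≤ γ₀ ∧ ∃ C : ℝ, 0 < C ∧
      ∀ (ε γ τ : ℝ) (ξ : Fin 2 → ℝ), 0 < ε → ε ≤ 1 → γ₀ ≤ γ →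
        ∀ (a₀ : ℝ → ℝ) (a : ℝ → Fin 3 → Fin 3 → ℝ) (Ω F : ℝ → ℂ),
          ContDiffOn ℝ 1 a₀ (Set.Iic 0) → ContDiffOn ℝ 1 a (Set.Iic 0) →
          (∀ z ≤ (0 : ℝ), ∀ i j, a z i j = a z j i) →
          (∀ z ≤ (0 : ℝ), m ≤ a₀ z ∧ m ≤ a z 2 2) →
          (∀ z ≤ (0 : ℝ),
            |a₀ z| + Real.sqrt (∑ i : Fin 3, ∑ j : Fin 3, (a z i j) ^ 2)
              + Real.sqrt ε * (|derivWithin a₀ (Set.Iic 0) z|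
                + Real.sqrt (∑ i : Fin 3, ∑ j : Fin 3,
                    (derivWithin (fun s => a s i j) (Set.Iic 0) z) ^ 2)) ≤ M) →
          (∀ z ≤ (0 : ℝ), ∀ η : Fin 3 → ℝ,
            c₀ * (∑ i : Fin 3, η i ^ 2)
              ≤ ∑ i : Fin 3, ∑ j : Fin 3, η i * a z i j * η j) →
          ContDiffOn ℝ 2 Ω (Set.Iic 0) → ContinuousOn F (Set.Iic 0) →
          IntegrableOn (fun z => ‖Ω z‖ ^ 2) (Set.Iio 0) volume →
          IntegrableOn (fun z => ‖deriv Ω z‖ ^ 2) (Set.Iio 0) volume →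
          IntegrableOn (fun z => ‖F z‖ ^ 2) (Set.Iio 0) volume →
          Filter.Tendsto Ω Filter.atBot (nhds 0) →
          Filter.Tendsto (deriv Ω) Filter.atBot (nhds 0) →
          (∀ z < (0 : ℝ),
            ((a₀ z / a z 2 2 : ℝ) : ℂ) * ((γ : ℂ) + (τ : ℂ) * Complex.I) * Ω z
              + ((∑ i : Fin 2, ∑ j : Fin 2,
                    a z i.castSucc j.castSucc / a z 2 2 * (ε * ξ i * ξ j) : ℝ) : ℂ) * Ω z
              - 2 * Complex.I
                * ((∑ k : Fin 2, a z k.castSucc 2 / a z 2 2 * (ε * ξ k) : ℝ) : ℂ)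
                * deriv Ω z
            = (ε : ℂ) * deriv (deriv Ω) z
              + (Complex.I * (ε : ℂ)
                  * ((∑ k : Fin 2,
                        derivWithin (fun s => a s 2 k.castSucc) (Set.Iic 0) z
                          / a z 2 2 * ξ k : ℝ) : ℂ) * Ω z
                + (ε : ℂ)
                  * ((derivWithin (fun s => a s 2 2) (Set.Iic 0) z / a z 2 2 : ℝ) : ℂ)
                  * deriv Ω z)
              + F z) →
          (γ ^ 2 + τ ^ 2 + ε ^ 2 * (∑ i : Fin 2, ξ i ^ 2) ^ 2) ^ ((1 : ℝ) / 4)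
              * (∫ z in Set.Iio (0 : ℝ), ‖Ω z‖ ^ 2)
            + ε / (γ ^ 2 + τ ^ 2 + ε ^ 2 * (∑ i : Fin 2, ξ i ^ 2) ^ 2) ^ ((1 : ℝ) / 4)
              * (∫ z in Set.Iio (0 : ℝ), ‖deriv Ω z‖ ^ 2)
          ≤ C * (Real.sqrt ε * ‖Ω 0‖ ^ 2
              + (∫ z in Set.Iio (0 : ℝ), ‖F z‖ ^ 2)
                / ((γ ^ 2 + τ ^ 2 + ε ^ 2 * (∑ i : Fin 2, ξ i ^ 2) ^ 2) ^ ((1 : ℝ) / 4)) ^ 3) := by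
  set c := min m c₀ with hcd
  have hc : 0 < c := lt_min hm hc₀
  have hcm : c ≤ m := min_le_left _ _
  have hcc : c ≤ c₀ := min_le_right _ _
  set C1 := 4*M^2/c + c/4 with hC1
  set C2 := M^2/(c*m/(32*M)) + M with hC2
  have hC1p : 0 < C1 := by positivity
  have hC2p : 0 < C2 := by positivity
  refine ⟨1, le_rfl, 2/c*(C1+C2), by positivity, ?_⟩
  intro ε γ τ ξ hε hε1 hγ a₀ a Ω F ha₀ ha hsym hpos hbd hell hΩ hF iΩ iD iF lΩ lD heq
  obtain ⟨r, hr, hrε⟩ : ∃ r, 0 < r ∧ ε = r^2 :=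
    ⟨Real.sqrt ε, Real.sqrt_pos.2 hε, (Real.sq_sqrt hε.le).symm⟩
  have hsq : Real.sqrt ε = r := by rw [hrε, Real.sqrt_sq hr.le]
  rw [hsq] at hbd ⊢
  simp only [Fin.sum_univ_two] at heq ⊢
  obtain ⟨X, hX, hX2⟩ : ∃ X, 0 ≤ X ∧ ξ 0^2 + ξ 1^2 = X^2 :=
    ⟨_, Real.sqrt_nonneg _, (Real.sq_sqrt (by positivity)).symm⟩
  have hLe : γ ^ 2 + τ ^ 2 + ε ^ 2 * (ξ 0^2 + ξ 1^2) ^ 2 = γ^2+τ^2+(r^2*X^2)^2 := by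
    rw [hX2, hrε]; ring
  rw [hLe]
  obtain ⟨L, hLd⟩ : ∃ L, L = (γ^2+τ^2+(r^2*X^2)^2)^((1:ℝ)/4) := ⟨_, rfl⟩
  rw [← hLd]
  obtain ⟨hL1, hγL, hτL, hXL, hL2⟩ := pe_weight γ τ (r^2*X^2) L hγ (by positivity) hLd
  have hL0 : 0 < L := by linarith
  have hX1 : r*X ≤ L := by
    apply le_of_sq_le_sq _ hL0.le
    rw [mul_pow]; exact hXL
  obtain ⟨cD, hDE, dΩ, dD⟩ := pe_Om Ω hΩ
  set D := derivWithin Ω (Set.Iic 0) with hD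
  -- bounds on coefficients
  have hB : ∀ z ≤ 0, |a₀ z| ≤ M ∧ (∑ i : Fin 3, ∑ j : Fin 3, (a z i j) ^ 2) ≤ M^2 ∧
      r^2*(∑ i : Fin 3, ∑ j : Fin 3,
        (derivWithin (fun s => a s i j) (Set.Iic 0) z) ^ 2) ≤ M^2 := fun z hz =>
    pe_bound _ r _ _ _ M hr (by positivity) (by positivity) (hbd z hz)
  simp only [Fin.sum_univ_three] at hB hell
  have lD' : Filter.Tendsto D Filter.atBot (nhds 0) := by
    refine lD.congr' ?_
    filter_upwards [Filter.eventually_lt_atBot (0:ℝ)] with z hz using (hDE z hz).symm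
  have hN : ∀ g : ℝ → ℂ, (fun z => ‖g z‖^2) = fun z => (g z).re^2 + (g z).im^2 :=
    fun g => funext fun z => pe_norm _
  have iD0 : IntegrableOn (fun z => ‖D z‖^2) (Set.Iio 0) volume :=
    iD.congr_fun (fun z hz => by simp only [hDE z hz]) measurableSet_Iio
  have hDint : ∫ z in Set.Iio (0:ℝ), ‖deriv Ω z‖^2 = ∫ z in Set.Iio (0:ℝ), ‖D z‖^2 :=
    setIntegral_congr_fun measurableSet_Iio (fun z hz => by simp only [hDE z hz])
  have cre : ∀ g : ℝ → ℂ, ContinuousOn g (Set.Iic 0) →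
      ContinuousOn (fun z => (g z).re) (Set.Iic 0) := fun g hg =>
    Complex.continuous_re.comp_continuousOn hg
  have cim : ∀ g : ℝ → ℂ, ContinuousOn g (Set.Iic 0) →
      ContinuousOn (fun z => (g z).im) (Set.Iic 0) := fun g hg =>
    Complex.continuous_im.comp_continuousOn hg
  have lre : ∀ g : ℝ → ℂ, Filter.Tendsto g Filter.atBot (nhds 0) →
      Filter.Tendsto (fun z => (g z).re) Filter.atBot (nhds 0) := fun g hg => 
    (Complex.continuous_re.tendsto 0).comp hg
  have lim : ∀ g : ℝ → ℂ, Filter.Tendsto g Filter.atBot (nhds 0) →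
      Filter.Tendsto (fun z => (g z).im) Filter.atBot (nhds 0) := fun g hg => 
    (Complex.continuous_im.tendsto 0).comp hg
  -- derivative shorthand
  obtain ⟨a', ha'⟩ : ∃ a' : Fin 3 → Fin 3 → ℝ → ℝ,
      ∀ i j z, derivWithin (fun s => a s i j) (Set.Iic 0) z = a' i j z := ⟨_, fun _ _ _ => rfl⟩
  have hda : ∀ i j, ∀ z < 0, HasDerivAt (fun s => a s i j) (a' i j z) z := fun i j z hz => by
    rw [← ha']; exact (pe_entry a ha i j).2 z hz
  simp only [ha'] at hB heq
  have hc0 : (Fin.castSucc (0 : Fin 2) : Fin 3) = 0 := rfl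
  have hc1 : (Fin.castSucc (1 : Fin 2) : Fin 3) = 1 := rfl
  simp only [hc0, hc1] at heq
  have hmul : ∀ z < 0, ((r:ℂ)^2 * (a z 2 2 : ℂ)) * deriv (deriv Ω) z =
      (a₀ z : ℂ) * ((γ : ℂ) + (τ : ℂ) * Complex.I) * Ω z
      + (r:ℂ)^2 * ((a z 0 0 * (ξ 0 * ξ 0) + a z 0 1 * (ξ 0 * ξ 1)
          + (a z 1 0 * (ξ 1 * ξ 0) + a z 1 1 * (ξ 1 * ξ 1)) : ℝ) : ℂ) * Ω z
      - 2 * Complex.I * (r:ℂ)^2 * ((a z 2 0 * ξ 0 + a z 2 1 * ξ 1 : ℝ) : ℂ) * D z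
      - Complex.I * (r:ℂ)^2 * ((a' 2 0 z * ξ 0 + a' 2 1 z * ξ 1 : ℝ) : ℂ) * Ω z
      - (r:ℂ)^2 * ((a' 2 2 z : ℝ) : ℂ) * D z - (a z 2 2 : ℂ) * F z := by
    intro z hz
    have hA0 : (a z 2 2 : ℂ) ≠ 0 := by
      exact_mod_cast (lt_of_lt_of_le hm (hpos z hz.le).2).ne'
    have h := heq z hz
    rw [← hDE z hz, hsym z hz.le 0 2, hsym z hz.le 1 2, hrε] at h
    push_cast at h ⊢
    field_simp at h
    linear_combination -h
  have main := pe_mid m c M r γ τ X L a₀ (fun z => a z 2 2) (fun z => a' 2 2 z)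
    (fun z => a z 2 0 * ξ 0 + a z 2 1 * ξ 1) (fun z => a' 2 0 z * ξ 0 + a' 2 1 z * ξ 1)
    (fun z => a z 0 0 * (ξ 0 * ξ 0) + a z 0 1 * (ξ 0 * ξ 1)
          + (a z 1 0 * (ξ 1 * ξ 0) + a z 1 1 * (ξ 1 * ξ 1)))
    (fun z => (Ω z).re) (fun z => (Ω z).im) (fun z => (D z).re) (fun z => (D z).im)
    (fun z => (F z).re) (fun z => (F z).im)
    (fun z => (deriv (deriv Ω) z).re) (fun z => (deriv (deriv Ω) z).im)
    hm hc hM hr hX hL1 (by linarith) hγL hτL hX1 hL2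
    (fun z hz => (hB z hz).1) (fun z hz => hcm.trans (hpos z hz).1) (fun z hz => (hpos z hz).2)
    (fun z hz => by
      apply abs_le_of_sq_le_sq _ hM.le
      refine le_trans ?_ (hB z hz).2.1
      rw [← sub_nonneg]; ring_nf; positivity)
    (fun z hz => by
      apply abs_le_of_sq_le_sq _ hM.le
      refine le_trans ?_ (hB z hz).2.2
      rw [← sub_nonneg]; ring_nf; positivity)
    (fun z hz => by
      refine pe_lin _ _ _ _ M X hM.le hX ?_ hX2
      refine le_trans ?_ (hB z hz).2.1
      rw [← sub_nonneg]; ring_nf; positivity)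
    (fun z hz => by
      have := pe_lin (r * a' 2 0 z) (r * a' 2 1 z) _ _ M X hM.le hX (by
        refine le_trans ?_ (hB z hz).2.2
        rw [← sub_nonneg]; ring_nf; positivity) hX2
      convert this using 2
      ring)
    (fun z hz => by
      rw [← hX2]
      refine pe_Q _ _ _ _ _ _ M hM.le ?_
      refine le_trans ?_ (hB z hz).2.1
      rw [← sub_nonneg]; ring_nf; positivity)
    (fun z hz => by
      have h1 := hell z hz.le ![-(ξ 0 * (Ω z).im), -(ξ 1 * (Ω z).im), (D z).re]
      have h2 := hell z hz.le ![ξ 0 * (Ω z).re, ξ 1 * (Ω z).re, (D z).im]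
      simp only [Matrix.cons_val_zero, Matrix.cons_val_one, Matrix.cons_val] at h1 h2
      rw [hsym z hz.le 0 2, hsym z hz.le 1 2] at h1 h2
      have h3 : c*(X^2*((Ω z).re^2+(Ω z).im^2) + ((D z).re^2+(D z).im^2)) ≤
        c₀*(X^2*((Ω z).re^2+(Ω z).im^2) + ((D z).re^2+(D z).im^2)) := by gcongr
      refine h3.trans ?_
      rw [← hX2]
      linarith)
    (fun z hz => by
      have := congrArg Complex.re (hmul z hz)
      simp only [← Complex.ofReal_pow, ← Complex.ofReal_mul, Complex.add_re, Complex.sub_re,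
        Complex.mul_re, Complex.mul_im, Complex.add_im, Complex.sub_im, Complex.ofReal_re,
        Complex.ofReal_im, Complex.I_re, Complex.I_im, Complex.re_ofNat, Complex.im_ofNat] at this
      linear_combination this)
    (fun z hz => by
      have := congrArg Complex.im (hmul z hz)
      simp only [← Complex.ofReal_pow, ← Complex.ofReal_mul, Complex.add_re, Complex.sub_re,
        Complex.mul_re, Complex.mul_im, Complex.add_im, Complex.sub_im, Complex.ofReal_re,
        Complex.ofReal_im, Complex.I_re, Complex.I_im, Complex.re_ofNat, Complex.im_ofNat] at this
      linear_combination this)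
    (hda 2 2)
    (fun z hz => ((hda 2 0 z hz).mul_const _).add ((hda 2 1 z hz).mul_const _))
    (fun z hz => (pe_hD (dΩ z hz)).1) (fun z hz => (pe_hD (dΩ z hz)).2)
    (fun z hz => (pe_hD (dD z hz)).1) (fun z hz => (pe_hD (dD z hz)).2)
    (pe_entry a ha 2 2).1
    (((pe_entry a ha 2 0).1.mul_const _).add ((pe_entry a ha 2 1).1.mul_const _))
    (cre _ hΩ.continuousOn) (cim _ hΩ.continuousOn) (cre _ cD) (cim _ cD)
    (lre _ lΩ) (lim _ lΩ) (lre _ lD') (lim _ lD')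
    (by rw [← hN]; exact iΩ) (by rw [← hN]; exact iD0) (by rw [← hN]; exact iF)
  simp only [← pe_norm] at main
  rw [← hC1, ← hC2] at main
  rw [hDint, hrε]
  have p1 : 0 ≤ ∫ z in Set.Iio (0:ℝ), ‖F z‖^2 := integral_nonneg fun z => by positivity
  generalize (∫ z in Set.Iio (0:ℝ), ‖F z‖^2) = IF at *
  generalize (∫ z in Set.Iio (0:ℝ), ‖D z‖^2) = ID at *
  generalize (∫ z in Set.Iio (0:ℝ), ‖Ω z‖^2) = IW at *
  have p2 : 0 ≤ ‖Ω 0‖^2 := by positivity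
  generalize ‖Ω 0‖^2 = W at *
  have e1 : L*IW + r^2/L*ID = 2/c/L*(c/2*(L^2*IW + r^2*ID)) := by field_simp
  have e2 : c/2*(L^2*IW + r^2*ID) ≤ C1/L^2*IF + C2*(r*L*W) := by linarith
  rw [e1]
  calc 2/c/L*(c/2*(L^2*IW + r^2*ID)) ≤ 2/c/L*(C1/L^2*IF + C2*(r*L*W)) := by gcongr
    _ = 2/c*(C1*(IF/L^3) + C2*(r*W)) := by field_simp
    _ ≤ 2/c*((C1+C2)*(IF/L^3) + (C1+C2)*(r*W)) := by
      gcongr <;> linarith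
    _ = _ := by ring
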